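/- Let y₁(q) = q^{11/60}·L₁(q) and y₂(q) = q^{-1/60}·L₂(q) be the two modified Rogers–Ramanujan products (characters of the c = -22/5 minimal models). Their Wronskian with respect to q d/dq satisfies y₁·(q d/dq)y₂ - ((q d/dq)y₁)·y₂ = (-1/5)·q^{1/6}·∏_{n≥1}(1-q^n)⁴ = (-1/5)·η(τ)⁴. -/

import Mathlib

open scoped BigOperators Real

open Complex

/-- Dedekind eta function (q-product form). -/
noncomputable def dedekindEta (τ : ℂ) : ℂ :=
  Complex.exp (2 * π * I * τ / 24) * ∏' n : ℕ, (1 - Complex.exp (2 * π * I * τ) ^ (n + 1))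

/-
Write `q = exp (2πiτ)`, `' = q d/dq` and `θ_c = ∑ (-1)ʲ q ^ ((10 j + c)² / 40)`. The Jacobi triple
product gives `y₁ = θ₃ / η` and `y₂ = θ₁ / η`, so the Wronskian is `(θ₃ θ₁' - θ₃' θ₁) / η²`, and it
remains to show that `θ₁ θ₃' - θ₁' θ₃ = η⁶ / 5`.

Up to the factor `40`, the left-hand side is a double series over `(10 m + 1) + i (10 n + 3)`.
Dividing by `1 - 2i`, it becomes the part over `z ≡ 1 mod (1 + 2i)` of the series
`∑ (-1) ^ (k + l) Re (((1 - 2i) z)²) q ^ (|z|² / 8)` over `z = (2k + 1) + i (2l + 1)`. The terms of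
this series are invariant under `z ↦ i z`, which permutes the four nonzero classes modulo `1 + 2i`,
and the class of zero contributes `0` by antisymmetry. Since `Re (((1 - 2i)(A + iB))²)` is
`8 A B - 3 (A² - B²)`, the whole series is `8 (∑ (-1)ᵏ (2k + 1) q ^ ((2k + 1)² / 8))²`, which is
`8 (2 η³)²` by Jacobi's identity. Both the triple product and Jacobi's identity are limits of the
`q`-binomial theorem, the latter of its derivative at a zero.
-/

open Filter Topology Finset

section GaussianBinomials

/-- The Gaussian binomial coefficient `[n, k]` at `q`, defined by the `q`-Pascal recursion so that
no division by `1 - q ^ i` occurs. -/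
def gaussBinom {R : Type*} [CommSemiring R] (q : R) : ℕ → ℕ → R
  | _, 0 => 1
  | 0, _ + 1 => 0
  | n + 1, k + 1 => gaussBinom q n k + q ^ (k + 1) * gaussBinom q n (k + 1)

/-- The `q`-Pochhammer symbol `(q; q)ₙ = (1 - q)(1 - q²)⋯(1 - qⁿ)`. -/
def qPochhammer {R : Type*} [CommRing R] (q : R) (n : ℕ) : R := ∏ k ∈ range n, (1 - q ^ (k + 1))

lemma gaussBinom_eq_zero_of_lt {R : Type*} [CommSemiring R] (q : R) {n k : ℕ} (h : n < k) :
    gaussBinom q n k = 0 := by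
  induction n generalizing k with
  | zero => obtain ⟨k, rfl⟩ := Nat.exists_eq_succ_of_ne_zero h.ne'; rfl
  | succ n ih =>
    obtain ⟨k, rfl⟩ := Nat.exists_eq_succ_of_ne_zero (Nat.zero_lt_of_lt h).ne'
    simp only [gaussBinom, ih (Nat.succ_lt_succ_iff.mp h), ih (Nat.lt_of_succ_lt h), mul_zero,
      add_zero]

lemma gaussBinom_self {R : Type*} [CommSemiring R] (q : R) (n : ℕ) : gaussBinom q n n = 1 := by
  induction n with
  | zero => rfl
  | succ n ih => simp [gaussBinom, ih, gaussBinom_eq_zero_of_lt q n.lt_succ_self]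

theorem prod_one_add_pow_mul_eq_sum_gaussBinom {R : Type*} [CommSemiring R] (q t : R) (n : ℕ) :
    ∏ k ∈ range n, (1 + q ^ k * t) =
      ∑ k ∈ range (n + 1), q ^ k.choose 2 * gaussBinom q n k * t ^ k := by
  induction n generalizing t with
  | zero => simp [gaussBinom]
  | succ n ih =>
    have peel : ∏ k ∈ range (n + 1), (1 + q ^ k * t) =
        (1 + t) * ∑ k ∈ range (n + 1), q ^ k.choose 2 * gaussBinom q n k * (q * t) ^ k := by
      rw [← ih, prod_range_succ', mul_comm]
      simp only [pow_succ, pow_zero, one_mul, mul_assoc]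
    have pascal (k : ℕ) : q ^ (k + 1).choose 2 * gaussBinom q (n + 1) (k + 1) * t ^ (k + 1) =
        q ^ (k + 1).choose 2 * gaussBinom q n (k + 1) * (q * t) ^ (k + 1) +
          t * (q ^ k.choose 2 * gaussBinom q n k * (q * t) ^ k) := by
      rw [gaussBinom, Nat.choose_succ_succ' k 1, Nat.choose_one_right]
      ring
    have shift : ∑ k ∈ range (n + 1), q ^ k.choose 2 * gaussBinom q n k * (q * t) ^ k =
        ∑ k ∈ range (n + 1),
          q ^ (k + 1).choose 2 * gaussBinom q n (k + 1) * (q * t) ^ (k + 1) + 1 := by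
      have zero : q ^ (0 : ℕ).choose 2 * gaussBinom q n 0 * (q * t) ^ 0 = 1 := by simp [gaussBinom]
      rw [← zero, ← sum_range_succ' (fun k => q ^ k.choose 2 * gaussBinom q n k * (q * t) ^ k),
        sum_range_succ _ (n + 1), gaussBinom_eq_zero_of_lt q n.lt_succ_self, mul_zero, zero_mul,
        add_zero]
    rw [peel, sum_range_succ' _ (n + 1), sum_congr rfl fun k _ => pascal k, sum_add_distrib,
      ← mul_sum, add_mul, one_mul, add_right_comm]
    nth_rw 1 [shift]
    simp [gaussBinom]

lemma gaussBinom_mul_qPochhammer {R : Type*} [CommRing R] (q : R) (n k : ℕ) :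
    gaussBinom q (n + k) k * (qPochhammer q n * qPochhammer q k) = qPochhammer q (n + k) := by
  have succ (m : ℕ) : qPochhammer q (m + 1) = qPochhammer q m * (1 - q ^ (m + 1)) :=
    prod_range_succ _ _
  induction k generalizing n with
  | zero => simp [gaussBinom, qPochhammer]
  | succ k ihk =>
    induction n with
    | zero => simp [gaussBinom_self, qPochhammer]
    | succ n ihn =>
      have h₁ := ihk (n + 1)
      rw [show n + (k + 1) = n + 1 + k by ring] at ihn
      rw [← add_assoc (n + 1) k 1, gaussBinom, succ (n + 1 + k)]
      rw [succ n] at h₁ ⊢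
      rw [succ k] at ihn ⊢
      linear_combination (1 - q ^ (k + 1)) * h₁ + q ^ (k + 1) * (1 - q ^ (n + 1)) * ihn

lemma prod_mul_prod_inv_eq_prod_range_two_mul {K : Type*} [Field K] {x w : K} (hx : x ≠ 0)
    (hw : w ≠ 0) (n : ℕ) :
    ∏ k ∈ range n, (1 + w * x ^ (2 * k + 1)) * (1 + w⁻¹ * x ^ (2 * k + 1)) =
      x ^ n ^ 2 / w ^ n * ∏ k ∈ range (2 * n), (1 + (x ^ 2) ^ k * (w * x / x ^ (2 * n))) := by
  induction n with
  | zero => simp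
  | succ n ih =>
    have shift (k : ℕ) : (x ^ 2) ^ (k + 1) * (w * x / x ^ (2 * (n + 1))) =
        (x ^ 2) ^ k * (w * x / x ^ (2 * n)) := by
      field_simp
      ring
    rw [prod_range_succ, ih, show 2 * (n + 1) = 2 * n + 1 + 1 by ring, prod_range_succ',
      prod_range_succ]
    simp only [← show 2 * (n + 1) = 2 * n + 1 + 1 by ring, shift]
    generalize ∏ k ∈ range (2 * n), (1 + (x ^ 2) ^ k * (w * x / x ^ (2 * n))) = P
    field_simp
    ring

-- The `q`-binomial theorem for `q = x²`, `t = w x¹⁻²ⁿ`, with summation index `j = k - n`.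
theorem prod_mul_prod_inv_eq_sum_gaussBinom {K : Type*} [Field K] {x w : K} (hx : x ≠ 0)
    (hw : w ≠ 0) (n : ℕ) :
    ∏ k ∈ range n, (1 + w * x ^ (2 * k + 1)) * (1 + w⁻¹ * x ^ (2 * k + 1)) =
      ∑ j ∈ Icc (-n : ℤ) n,
        gaussBinom (x ^ 2) (2 * n) (n + j).toNat * (x ^ (j ^ 2) * w ^ j) := by
  rw [prod_mul_prod_inv_eq_prod_range_two_mul hx hw, prod_one_add_pow_mul_eq_sum_gaussBinom,
    mul_sum]
  refine sum_nbij' (fun k => (k : ℤ) - n) (fun j => (n + j).toNat) ?_ ?_ ?_ ?_ fun k _ => ?_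
  · intro k hk; simp only [Finset.mem_range, Finset.mem_Icc] at *; lia
  · intro k hk; simp only [Finset.mem_range, Finset.mem_Icc] at *; lia
  · intro k _; simp
  · intro j hj; simp only [Finset.mem_Icc] at *; lia
  · have hchoose : (x ^ 2) ^ k.choose 2 * x ^ k = x ^ (k ^ 2) := by
      rw [← pow_mul, ← pow_add, mul_comm 2, Nat.choose_two_right,
        Nat.div_mul_cancel (Nat.even_mul_pred_self k).two_dvd, Nat.mul_sub_one,
        Nat.sub_add_cancel (Nat.le_mul_self k), sq]
    have hzpow : x ^ (((k : ℤ) - n) ^ 2) * x ^ (2 * n * k) = x ^ (k ^ 2) * x ^ (n ^ 2) := by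
      simp only [← zpow_natCast, ← zpow_add₀ hx]
      congr 1
      push_cast
      ring
    have hx' := pow_ne_zero (2 * n * k) hx
    rw [add_sub_cancel, Int.toNat_natCast, zpow_sub₀ hw, zpow_natCast, zpow_natCast,
      eq_div_of_mul_eq hx' hzpow, ← hchoose, div_pow, ← pow_mul x (2 * n) k, mul_pow]
    field_simp

-- At `w = -x` the factor `1 + w⁻¹ x` vanishes, so only its derivative contributes.
lemma hasDerivAt_prod_mul_prod_inv_neg {K : Type*} [NontriviallyNormedField K] {x : K} (hx : x ≠ 0)
    (n : ℕ) :
    HasDerivAt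
      (fun w => ∏ k ∈ range (n + 1), (1 + w * x ^ (2 * k + 1)) * (1 + w⁻¹ * x ^ (2 * k + 1)))
      ((-x)⁻¹ * (qPochhammer (x ^ 2) (n + 1) * qPochhammer (x ^ 2) n)) (-x) := by
  have hw : -x ≠ 0 := neg_ne_zero.mpr hx
  set H : K → K := fun w =>
    (∏ k ∈ range (n + 1), (1 + w * x ^ (2 * k + 1))) * ∏ k ∈ range n, (1 + w⁻¹ * x ^ (2 * k + 3))
  have hH : H (-x) = qPochhammer (x ^ 2) (n + 1) * qPochhammer (x ^ 2) n := by
    simp only [H, qPochhammer]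
    congr 1 <;> refine prod_congr rfl fun k _ => ?_
    · ring
    · field_simp
      ring
  have hfactor (w : K) : ∏ k ∈ range (n + 1), (1 + w * x ^ (2 * k + 1)) *
      (1 + w⁻¹ * x ^ (2 * k + 1)) = (1 + w⁻¹ * x) * H w := by
    rw [prod_mul_distrib, prod_range_succ' (fun k => 1 + w⁻¹ * x ^ (2 * k + 1))]
    simp only [H]
    ring_nf
  have hdiff : DifferentiableAt K H (-x) := by
    fun_prop (disch := assumption)
  simp only [hfactor]
  refine ((((hasDerivAt_inv hw).mul_const x).const_add 1).mul hdiff.hasDerivAt).congr_deriv ?_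
  rw [← hH]
  field_simp
  ring

lemma sum_int_mul_gaussBinom {K : Type*} [NontriviallyNormedField K] {x : K} (hx : x ≠ 0) (n : ℕ) :
    ∑ j ∈ Icc (-(n + 1 : ℕ) : ℤ) (n + 1 : ℕ),
        gaussBinom (x ^ 2) (2 * (n + 1)) ((n + 1 : ℕ) + j).toNat *
          (j * (x ^ (j ^ 2) * (-x) ^ j)) =
      qPochhammer (x ^ 2) (n + 1) * qPochhammer (x ^ 2) n := by
  have hw : -x ≠ 0 := neg_ne_zero.mpr hx
  have hsum : HasDerivAt (fun w => ∑ j ∈ Icc (-(n + 1 : ℕ) : ℤ) (n + 1 : ℕ),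
      gaussBinom (x ^ 2) (2 * (n + 1)) ((n + 1 : ℕ) + j).toNat * (x ^ (j ^ 2) * w ^ j))
      (∑ j ∈ Icc (-(n + 1 : ℕ) : ℤ) (n + 1 : ℕ),
        gaussBinom (x ^ 2) (2 * (n + 1)) ((n + 1 : ℕ) + j).toNat *
          (x ^ (j ^ 2) * (j * (-x) ^ (j - 1)))) (-x) :=
    HasDerivAt.fun_sum fun j _ => ((hasDerivAt_zpow j (-x) (.inl hw)).const_mul _).const_mul _
  have heq := ((hasDerivAt_prod_mul_prod_inv_neg hx n).congr_of_eventuallyEq <|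
    (eventually_ne_nhds hw).mono fun w hw' =>
      (prod_mul_prod_inv_eq_sum_gaussBinom hx hw' (n + 1)).symm).unique hsum
  rw [inv_mul_eq_iff_eq_mul₀ hw, mul_sum] at heq
  rw [heq]
  refine sum_congr rfl fun j _ => ?_
  rw [zpow_sub_one₀ hw]
  generalize (-x) ^ j = y
  field_simp

end GaussianBinomials

section JacobiTripleProduct

/-- Euler's function `∏ (1 - qⁿ)` over `n ≥ 1`, equal to `q ^ (-1 / 24) * η`. -/
noncomputable def eulerFunction (q : ℂ) : ℂ := ∏' n : ℕ, (1 - q ^ (n + 1))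

lemma one_sub_pow_succ_ne_zero {K : Type*} [NormedDivisionRing K] {q : K} (hq : ‖q‖ < 1) (n : ℕ) :
    1 - q ^ (n + 1) ≠ 0 := fun h => by
  have hpow := pow_lt_one₀ (norm_nonneg q) hq n.succ_ne_zero
  rw [← norm_pow, ← sub_eq_zero.mp h, norm_one] at hpow
  exact hpow.false

lemma qPochhammer_ne_zero {K : Type*} [NormedField K] {q : K} (hq : ‖q‖ < 1) (n : ℕ) :
    qPochhammer q n ≠ 0 :=
  prod_ne_zero_iff.mpr fun k _ => one_sub_pow_succ_ne_zero hq k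

lemma gaussBinom_eq_div {K : Type*} [NormedField K] {q : K} (hq : ‖q‖ < 1) {n k : ℕ} (hk : k ≤ n) :
    gaussBinom q n k = qPochhammer q n / (qPochhammer q (n - k) * qPochhammer q k) := by
  rw [eq_div_iff (mul_ne_zero (qPochhammer_ne_zero hq _) (qPochhammer_ne_zero hq _))]
  simpa only [Nat.sub_add_cancel hk] using gaussBinom_mul_qPochhammer q (n - k) k

lemma tendsto_qPochhammer {q : ℂ} (hq : ‖q‖ < 1) :
    Tendsto (qPochhammer q) atTop (𝓝 (eulerFunction q)) :=
  (ModularForm.multipliable_one_sub_pow hq).hasProd.tendsto_prod_nat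

lemma eulerFunction_ne_zero {q : ℂ} (hq : ‖q‖ < 1) : eulerFunction q ≠ 0 := by
  simp only [eulerFunction, sub_eq_add_neg]
  refine tprod_one_add_ne_zero_of_summable (fun n => ?_) ?_
  · simpa only [← sub_eq_add_neg] using one_sub_pow_succ_ne_zero hq n
  · simpa using (summable_nat_add_iff 1).mpr (summable_geometric_of_lt_one (norm_nonneg q) hq)

lemma exists_norm_gaussBinom_le {q : ℂ} (hq : ‖q‖ < 1) :
    ∃ M : ℝ, ∀ n k, ‖gaussBinom q n k‖ ≤ M := by
  have hP := tendsto_qPochhammer hq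
  obtain ⟨M, hM⟩ := (Metric.isBounded_range_of_tendsto _ hP).exists_norm_le
  obtain ⟨N, hN⟩ := (Metric.isBounded_range_of_tendsto _
    (hP.inv₀ (eulerFunction_ne_zero hq))).exists_norm_le
  simp only [Set.forall_mem_range] at hM hN
  have hM₀ : 0 ≤ M := (norm_nonneg _).trans (hM 0)
  have hN₀ : 0 ≤ N := (norm_nonneg _).trans (hN 0)
  refine ⟨M * (N * N), fun n k => ?_⟩
  rcases lt_or_ge n k with hk | hk
  · rw [gaussBinom_eq_zero_of_lt q hk, norm_zero]
    positivity
  · rw [gaussBinom_eq_div hq hk, div_eq_mul_inv, mul_inv, norm_mul, norm_mul]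
    gcongr
    exacts [hM n, hN (n - k), hN k]

lemma tendsto_gaussBinom_two_mul {q : ℂ} (hq : ‖q‖ < 1) (j : ℤ) :
    Tendsto (fun n : ℕ => gaussBinom q (2 * n) (n + j).toNat) atTop (𝓝 (eulerFunction q)⁻¹) := by
  have hE := eulerFunction_ne_zero hq
  have hP {u : ℕ → ℕ} (hu : ∀ n, n ≤ u n + j.natAbs) :
      Tendsto (fun n => qPochhammer q (u n)) atTop (𝓝 (eulerFunction q)) :=
    (tendsto_qPochhammer hq).comp <|
      tendsto_atTop_mono (fun n => Nat.sub_le_of_le_add (hu n)) (tendsto_sub_atTop_nat j.natAbs)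
  have hlim := (hP (u := fun n => 2 * n) fun n => by lia).div
    ((hP (u := fun n => 2 * n - (n + j).toNat) fun n => by lia).mul
      (hP (u := fun n => (n + j).toNat) fun n => by lia)) (mul_ne_zero hE hE)
  rw [div_mul_cancel_left₀ hE] at hlim
  refine hlim.congr' ?_
  filter_upwards [eventually_ge_atTop j.natAbs] with n hn
  exact (gaussBinom_eq_div hq (by lia)).symm

lemma tendsto_sum_gaussBinom_mul {q : ℂ} (hq : ‖q‖ < 1) {g : ℤ → ℂ} (hg : Summable g) :
    Tendsto (fun n : ℕ => ∑ j ∈ Icc (-n : ℤ) n, gaussBinom q (2 * n) (n + j).toNat * g j) atTop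
      (𝓝 ((eulerFunction q)⁻¹ * ∑' j, g j)) := by
  obtain ⟨M, hM⟩ := exists_norm_gaussBinom_le hq
  rw [← tsum_mul_left]
  refine Tendsto.congr (fun n => (sum_eq_tsum_indicator _ _).symm) ?_
  refine tendsto_tsum_of_dominated_convergence (hg.norm.mul_left M) (fun j => ?_)
    (.of_forall fun n j => ?_)
  · refine ((tendsto_gaussBinom_two_mul hq j).mul_const (g j)).congr' ?_
    filter_upwards [eventually_ge_atTop j.natAbs] with n hn
    rw [Set.indicator_of_mem (by simp only [coe_Icc, Set.mem_Icc]; lia)]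
  · refine (norm_indicator_le_norm_self _ _).trans ?_
    rw [norm_mul]
    gcongr
    exact hM _ _

lemma jacobiTheta₂_term_eq_zpow (j : ℤ) (z τ : ℂ) :
    jacobiTheta₂_term j z τ = cexp (π * I * τ) ^ (j ^ 2) * cexp (2 * π * I * z) ^ j := by
  rw [jacobiTheta₂_term, ← exp_int_mul, ← exp_int_mul, ← Complex.exp_add]
  congr 1
  push_cast
  ring

lemma cexp_pi_mul_I_sq (τ : ℂ) : cexp (π * I * τ) ^ 2 = cexp (2 * π * I * τ) := by
  rw [← Complex.exp_nat_mul]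
  congr 1
  push_cast
  ring

lemma norm_cexp_two_pi_mul_I_lt_one {τ : ℂ} (hτ : 0 < τ.im) : ‖cexp (2 * π * I * τ)‖ < 1 :=
  UpperHalfPlane.norm_exp_two_pi_I_lt_one ⟨τ, hτ⟩

lemma summable_norm_pow_mul_add {q : ℂ} (hq : ‖q‖ < 1) {N : ℕ} (hN : N ≠ 0) (a : ℕ) :
    Summable fun n : ℕ => ‖q ^ (N * n + a)‖ := by
  simp only [pow_add, pow_mul, norm_mul, norm_pow]
  exact (summable_geometric_of_lt_one (by positivity)
    (pow_lt_one₀ (norm_nonneg q) hq hN)).mul_right _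

lemma tendsto_prod_jacobiTheta₂ (z : ℂ) {τ : ℂ} (hτ : 0 < τ.im) :
    Tendsto (fun n => ∏ k ∈ range n,
      (1 + cexp (2 * π * I * z) * cexp (π * I * τ) ^ (2 * k + 1)) *
      (1 + (cexp (2 * π * I * z))⁻¹ * cexp (π * I * τ) ^ (2 * k + 1))) atTop
      (𝓝 ((eulerFunction (cexp (2 * π * I * τ)))⁻¹ * jacobiTheta₂ z τ)) := by
  refine (tendsto_sum_gaussBinom_mul (norm_cexp_two_pi_mul_I_lt_one hτ)
    (hasSum_jacobiTheta₂_term z hτ).summable).congr fun n => ?_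
  rw [prod_mul_prod_inv_eq_sum_gaussBinom (exp_ne_zero _) (exp_ne_zero _), cexp_pi_mul_I_sq]
  simp only [jacobiTheta₂_term_eq_zpow]

theorem hasProd_jacobiTheta₂ (z : ℂ) {τ : ℂ} (hτ : 0 < τ.im) :
    HasProd (fun k : ℕ => (1 - cexp (π * I * τ) ^ (2 * k + 2)) *
      ((1 + cexp (2 * π * I * z) * cexp (π * I * τ) ^ (2 * k + 1)) *
        (1 + (cexp (2 * π * I * z))⁻¹ * cexp (π * I * τ) ^ (2 * k + 1)))) (jacobiTheta₂ z τ) := by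
  have hq := norm_cexp_two_pi_mul_I_lt_one hτ
  have hx : ‖cexp (π * I * τ)‖ < 1 := by
    rw [← cexp_pi_mul_I_sq, norm_pow] at hq
    exact (pow_lt_one_iff_of_nonneg (norm_nonneg _) two_ne_zero).mp hq
  have hmul (c : ℂ) : Multipliable fun k : ℕ => 1 + c * cexp (π * I * τ) ^ (2 * k + 1) :=
    multipliable_one_add_of_summable <| by
      simpa only [norm_mul] using (summable_norm_pow_mul_add hx two_ne_zero 1).mul_left ‖c‖
  have hprod := ((hmul (cexp (2 * π * I * z))).mul (hmul (cexp (2 * π * I * z))⁻¹)).hasProd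
  rw [tendsto_nhds_unique hprod.tendsto_prod_nat (tendsto_prod_jacobiTheta₂ z hτ)] at hprod
  convert (ModularForm.multipliable_one_sub_pow hq).hasProd.mul hprod using 1
  · simp only [← cexp_pi_mul_I_sq, ← pow_mul, mul_add, mul_one]
  · exact (mul_inv_cancel_left₀ (eulerFunction_ne_zero hq) _).symm

theorem hasSum_int_mul_jacobiTheta₂_term {τ : ℂ} (hτ : 0 < τ.im) :
    HasSum (fun j : ℤ => (j : ℂ) * jacobiTheta₂_term j (1 / 2 + τ / 2) τ)
      (eulerFunction (cexp (2 * π * I * τ)) ^ 3) := by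
  have hq := norm_cexp_two_pi_mul_I_lt_one hτ
  have hw : cexp (2 * π * I * (1 / 2 + τ / 2)) = -cexp (π * I * τ) := by
    rw [show 2 * π * I * (1 / 2 + τ / 2) = π * I + π * I * τ by ring, Complex.exp_add,
      exp_pi_mul_I, neg_one_mul]
  have hsum : Summable fun j : ℤ => (j : ℂ) * jacobiTheta₂_term j (1 / 2 + τ / 2) τ := by
    refine (summable_pow_mul_jacobiTheta₂_term_bound |(1 / 2 + τ / 2).im| hτ 1).of_norm_bounded
      fun j => ?_
    rw [norm_mul, pow_one, norm_intCast, Int.cast_abs]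
    gcongr
    exact_mod_cast norm_jacobiTheta₂_term_le hτ le_rfl le_rfl j
  have hfinite (n : ℕ) := sum_int_mul_gaussBinom (exp_ne_zero (π * I * τ)) n
  have hlim := (tendsto_sum_gaussBinom_mul hq hsum).comp (tendsto_add_atTop_nat 1)
  have hlim' := ((tendsto_qPochhammer hq).comp (tendsto_add_atTop_nat 1)).mul
    (tendsto_qPochhammer hq)
  have heq := tendsto_nhds_unique hlim (hlim'.congr fun n => ?_)
  · rw [inv_mul_eq_iff_eq_mul₀ (eulerFunction_ne_zero hq)] at heq
    rw [pow_succ', pow_two, ← heq]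
    exact hsum.hasSum
  · simp only [Function.comp_apply, jacobiTheta₂_term_eq_zpow, hw, ← cexp_pi_mul_I_sq, hfinite]

end JacobiTripleProduct

section ThetaSeries

/-- The `j`-th term of the theta series `∑ (-1)ʲ mᵖ q ^ (m² / 8N)` over the arithmetic progression
`m = 2 N j + c`. -/
noncomputable def thetaTerm (N : ℕ) (c : ℂ) (p : ℕ) (τ : ℂ) (j : ℤ) : ℂ :=
  (2 * N * j + c) ^ p * ((-1) ^ j * cexp (2 * π * I * τ * ((2 * N * j + c) ^ 2 / (8 * N))))

/-- The theta series `∑ (-1)ʲ mᵖ q ^ (m² / 8N)` over `m = 2 N j + c`, `j ∈ ℤ`. Applying `8N q d/dq`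
raises `p` by `2`. -/
noncomputable def thetaSeries (N : ℕ) (c : ℂ) (p : ℕ) (τ : ℂ) : ℂ := ∑' j, thetaTerm N c p τ j

variable {N : ℕ} {τ : ℂ}

lemma im_natCast_mul_pos (hN : N ≠ 0) (hτ : 0 < τ.im) : 0 < (N * τ).im := by
  rw [← ofReal_natCast, im_ofReal_mul]
  positivity

lemma thetaTerm_eq_mul_jacobiTheta₂_term (hN : N ≠ 0) (c : ℂ) (p : ℕ) (τ : ℂ) (j : ℤ) :
    thetaTerm N c p τ j = (2 * N * j + c) ^ p *
      (cexp (2 * π * I * τ * (c ^ 2 / (8 * N))) *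
        jacobiTheta₂_term j (1 / 2 + c / 2 * τ) (N * τ)) := by
  rw [thetaTerm, jacobiTheta₂_term, ← exp_pi_mul_I, ← exp_int_mul, ← Complex.exp_add,
    ← Complex.exp_add]
  congr 2
  field_simp
  ring

lemma summable_thetaTerm (hN : N ≠ 0) (c : ℂ) (p : ℕ) (hτ : 0 < τ.im) :
    Summable (thetaTerm N c p τ) := by
  have hpow (k : ℕ) : Summable fun j : ℤ => (j : ℂ) ^ k * thetaTerm N c p τ j := by
    induction p generalizing k with
    | zero =>
      have hbound : Summable fun j : ℤ =>
          (j : ℂ) ^ k * jacobiTheta₂_term j (1 / 2 + c / 2 * τ) (N * τ) := by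
        refine (summable_pow_mul_jacobiTheta₂_term_bound |(1 / 2 + c / 2 * τ).im|
          (im_natCast_mul_pos hN hτ) k).of_norm_bounded fun j => ?_
        rw [norm_mul, norm_pow, norm_intCast, Int.cast_abs]
        gcongr
        exact_mod_cast norm_jacobiTheta₂_term_le (im_natCast_mul_pos hN hτ) le_rfl le_rfl j
      refine (hbound.mul_left (cexp (2 * π * I * τ * (c ^ 2 / (8 * N))))).congr fun j => ?_
      rw [thetaTerm_eq_mul_jacobiTheta₂_term hN]
      ring
    | succ p ih =>
      refine (((ih (k + 1)).mul_left (2 * N : ℂ)).add ((ih k).mul_left c)).congr fun j => ?_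
      simp only [thetaTerm]
      ring
  simpa only [pow_zero, one_mul] using hpow 0

lemma hasSum_thetaTerm (hN : N ≠ 0) (c : ℂ) (p : ℕ) (hτ : 0 < τ.im) :
    HasSum (thetaTerm N c p τ) (thetaSeries N c p τ) :=
  (summable_thetaTerm hN c p hτ).hasSum

lemma thetaSeries_zero_eq_mul_jacobiTheta₂ (hN : N ≠ 0) (c τ : ℂ) :
    thetaSeries N c 0 τ =
      cexp (2 * π * I * τ * (c ^ 2 / (8 * N))) * jacobiTheta₂ (1 / 2 + c / 2 * τ) (N * τ) := by
  simp only [thetaSeries, thetaTerm_eq_mul_jacobiTheta₂_term hN, pow_zero, one_mul, tsum_mul_left,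
    jacobiTheta₂]

lemma jacobiTheta₂_term_fderiv_apply (n : ℤ) (z τ u v : ℂ) :
    jacobiTheta₂_term_fderiv n z τ (u, v) =
      2 * π * I * (n * u + n ^ 2 * v / 2) * jacobiTheta₂_term n z τ := by
  simp only [jacobiTheta₂_term_fderiv, jacobiTheta₂_term, add_apply, smul_apply,
    ContinuousLinearMap.coe_fst', ContinuousLinearMap.coe_snd',
    smul_eq_mul]
  ring

lemma hasDerivAt_jacobiTheta₂_comp_affine (b c d : ℂ) (hd : 0 < (d * τ).im) :
    HasDerivAt (fun t : ℂ => jacobiTheta₂ (b + c * t) (d * t))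
      (jacobiTheta₂_fderiv (b + c * τ) (d * τ) (c, d)) τ := by
  have hline : HasDerivAt (fun t : ℂ => (b + c * t, d * t)) (c, d) τ := by
    simpa using (((hasDerivAt_id τ).const_mul c).const_add b).prodMk ((hasDerivAt_id τ).const_mul d)
  have htheta := hasFDerivAt_jacobiTheta₂ (b + c * τ) hd
  exact htheta.comp_hasDerivAt (f := fun t : ℂ => (b + c * t, d * t)) τ hline

theorem hasDerivAt_thetaSeries (hN : N ≠ 0) (c : ℂ) (hτ : 0 < τ.im) :
    HasDerivAt (thetaSeries N c 0) (2 * π * I / (8 * N) * thetaSeries N c 2 τ) τ := by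
  have hNτ := im_natCast_mul_pos hN hτ
  set e : ℂ → ℂ := fun t => cexp (2 * π * I * t * (c ^ 2 / (8 * N)))
  have hexp : HasDerivAt e (e τ * (2 * π * I * (c ^ 2 / (8 * N)))) τ := by
    simpa using (((hasDerivAt_id τ).const_mul (2 * π * I)).mul_const (c ^ 2 / (8 * N))).cexp
  have htheta := hasDerivAt_jacobiTheta₂_comp_affine (1 / 2) (c / 2) N hNτ
  have hsum := (((hasSum_jacobiTheta₂_term (1 / 2 + c / 2 * τ) hNτ).mul_left
    (e τ * (2 * π * I * (c ^ 2 / (8 * N))))).add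
    (((ContinuousLinearMap.apply ℂ ℂ (c / 2, (N : ℂ))).hasSum
      (hasSum_jacobiTheta₂_term_fderiv (1 / 2 + c / 2 * τ) hNτ)).mul_left (e τ)))
  rw [funext (thetaSeries_zero_eq_mul_jacobiTheta₂ hN c)]
  refine (hexp.mul htheta).congr_deriv (hsum.unique ?_)
  convert (hasSum_thetaTerm hN c 2 hτ).mul_left (2 * π * I / (8 * N)) using 2 with j
  rw [ContinuousLinearMap.apply_apply, jacobiTheta₂_term_fderiv_apply,
    thetaTerm_eq_mul_jacobiTheta₂_term hN,
    show cexp (2 * π * I * τ * (c ^ 2 / (8 * N))) = e τ from rfl]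
  field_simp
  ring

theorem hasProd_thetaSeries {a b : ℕ} (hab : a + b ≠ 0) (hτ : 0 < τ.im) :
    HasProd (fun k : ℕ => (1 - cexp (2 * π * I * τ) ^ ((a + b) * (k + 1))) *
      ((1 - cexp (2 * π * I * τ) ^ ((a + b) * k + a)) *
        (1 - cexp (2 * π * I * τ) ^ ((a + b) * k + b))))
      (thetaSeries (a + b) (a - b) 0 τ /
        cexp (2 * π * I * τ * ((a - b) ^ 2 / (8 * (a + b : ℕ))))) := by
  rw [thetaSeries_zero_eq_mul_jacobiTheta₂ hab, mul_div_cancel_left₀ _ (exp_ne_zero _)]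
  convert hasProd_jacobiTheta₂ (1 / 2 + (a - b) / 2 * τ) (im_natCast_mul_pos hab hτ) using 2 with k
  set x := cexp (π * I * τ) with hx
  have hx₀ : x ≠ 0 := exp_ne_zero _
  have hnome : cexp (π * I * ((a + b : ℕ) * τ)) = x ^ (a + b) := by
    rw [hx, ← Complex.exp_nat_mul]
    ring_nf
  have hw : cexp (2 * π * I * (1 / 2 + (a - b) / 2 * τ)) = -(x ^ a / x ^ b) := by
    rw [hx, ← Complex.exp_nat_mul, ← Complex.exp_nat_mul, ← Complex.exp_sub, ← neg_one_mul,
      ← exp_pi_mul_I, ← Complex.exp_add]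
    ring_nf
  rw [hnome, hw, ← cexp_pi_mul_I_sq, ← hx]
  congr 1
  · ring
  · congr 1 <;> field_simp <;> ring

lemma thetaTerm_one_one_neg_sub_one (p : ℕ) (τ : ℂ) (j : ℤ) :
    thetaTerm 1 1 p τ (-j - 1) = (-1) ^ (p + 1) * thetaTerm 1 1 p τ j := by
  have hodd : (2 * (1 : ℕ) * (-j - 1 : ℤ) + 1 : ℂ) = -(2 * (1 : ℕ) * j + 1) := by
    push_cast
    ring
  have hsign : (-1 : ℂ) ^ (-j - 1) = -(-1) ^ j := by
    rw [zpow_sub_one₀ (by norm_num), zpow_neg, ← inv_zpow]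
    norm_num
  rw [thetaTerm, thetaTerm, hodd, hsign, neg_sq, neg_pow]
  ring

lemma thetaSeries_one_one_zero (τ : ℂ) : thetaSeries 1 1 0 τ = 0 := by
  have hreflect := (Equiv.subLeft (-1 : ℤ)).tsum_eq (thetaTerm 1 1 0 τ)
  have hodd (j : ℤ) : thetaTerm 1 1 0 τ (Equiv.subLeft (-1) j) = -thetaTerm 1 1 0 τ j := by
    rw [Equiv.subLeft_apply, neg_sub_left, neg_add', thetaTerm_one_one_neg_sub_one]
    ring
  simp only [hodd, tsum_neg] at hreflect
  exact neg_eq_self.mp hreflect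

lemma thetaSeries_one_one_one (hτ : 0 < τ.im) : thetaSeries 1 1 1 τ = 2 * dedekindEta τ ^ 3 := by
  have hsum := ((hasSum_int_mul_jacobiTheta₂_term hτ).mul_left
    (2 * cexp (2 * π * I * τ / 8))).add (hasSum_thetaTerm one_ne_zero 1 0 hτ)
  rw [thetaSeries_one_one_zero, add_zero] at hsum
  have hcube : 2 * dedekindEta τ ^ 3 =
      2 * cexp (2 * π * I * τ / 8) * eulerFunction (cexp (2 * π * I * τ)) ^ 3 := by
    rw [dedekindEta, mul_pow, ← Complex.exp_nat_mul, ← eulerFunction, mul_assoc]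
    ring_nf
  rw [hcube, ← hsum.tsum_eq, thetaSeries]
  refine tsum_congr fun j => ?_
  simp only [thetaTerm_eq_mul_jacobiTheta₂_term one_ne_zero]
  ring_nf

end ThetaSeries

section GaussianIntegerLattice

/-- The term `(-1) ^ (k + l) Re (((1 - 2i) z) ^ 2) q ^ (|z| ^ 2 / 8)` of a theta series over the
Gaussian integers `z = A + iB`, where `A = 2k + 1` and `B = 2l + 1`. Multiplication of `z` by `i`
changes the signs of the first two factors. -/
noncomputable def oddPairTerm (τ : ℂ) (p : ℤ × ℤ) : ℂ :=
  (-1) ^ (p.1 + p.2) *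
    (((2 * p.1 + 1) + 2 * (2 * p.2 + 1)) ^ 2 - ((2 * p.2 + 1) - 2 * (2 * p.1 + 1)) ^ 2) *
      cexp (2 * π * I * τ * (((2 * p.1 + 1) ^ 2 + (2 * p.2 + 1) ^ 2) / 8))

/-- Multiplication of `A + iB` by `i`, in the coordinates `A = 2k + 1`, `B = 2l + 1`. -/
def rotOddPair : ℤ × ℤ ≃ ℤ × ℤ where
  toFun p := (-p.2 - 1, p.1)
  invFun p := (p.2, -p.1 - 1)
  left_inv p := by simp
  right_inv p := by simp

/-- Multiplication of `A + iB` by `1 + 2i`, in the coordinates `A = 2k + 1`, `B = 2l + 1`. -/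
def mulOddPair (p : ℤ × ℤ) : ℤ × ℤ := (p.1 - 2 * p.2 - 1, 2 * p.1 + p.2 + 1)

/-- The solution of `(1 - 2i)(A + iB) = (10m + 1) + i(10n + 3)`, in the coordinates `A = 2k + 1`,
`B = 2l + 1`. -/
def offsetOddPair (p : ℤ × ℤ) : ℤ × ℤ := (p.1 - 2 * p.2 - 1, 2 * p.1 + p.2)

/-- The class of `A + iB` in `ℤ[i] / (1 + 2i) ≃ ℤ / 5`, where `i` acts as multiplication by `2`. -/
def oddPairResidue (p : ℤ × ℤ) : ZMod 5 := ((2 * p.1 + 1 + 2 * (2 * p.2 + 1) : ℤ) : ZMod 5)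

lemma oddPairResidue_rotOddPair (p : ℤ × ℤ) :
    oddPairResidue (rotOddPair p) = 2 * oddPairResidue p := by
  have h : (5 : ZMod 5) = 0 := rfl
  simp only [oddPairResidue, rotOddPair, Equiv.coe_fn_mk]
  push_cast
  linear_combination -(2 * p.2 + 1 : ZMod 5) * h

lemma mulOddPair_injective : Function.Injective mulOddPair := by
  rintro ⟨u, v⟩ ⟨u', v'⟩ h
  simp only [mulOddPair, Prod.mk.injEq] at h ⊢
  lia

lemma offsetOddPair_injective : Function.Injective offsetOddPair := by
  rintro ⟨m, n⟩ ⟨m', n'⟩ h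
  simp only [offsetOddPair, Prod.mk.injEq] at h ⊢
  lia

lemma range_mulOddPair : Set.range mulOddPair = oddPairResidue ⁻¹' {0} := by
  ext ⟨k, l⟩
  simp only [mulOddPair, oddPairResidue, Set.mem_range, Prod.mk.injEq, Prod.exists,
    Set.mem_preimage, Set.mem_singleton_iff, ZMod.intCast_zmod_eq_zero_iff_dvd]
  constructor
  · rintro ⟨u, v, rfl, rfl⟩
    lia
  · intro h
    exact ⟨(k + 2 * l - 1) / 5, l - 1 - 2 * ((k + 2 * l - 1) / 5), by lia, by lia⟩

lemma range_offsetOddPair : Set.range offsetOddPair = oddPairResidue ⁻¹' {1} := by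
  ext ⟨k, l⟩
  simp only [offsetOddPair, oddPairResidue, Set.mem_range, Prod.mk.injEq, Prod.exists,
    Set.mem_preimage, Set.mem_singleton_iff, ← Int.cast_one (R := ZMod 5),
    ZMod.intCast_eq_intCast_iff_dvd_sub]
  constructor
  · rintro ⟨m, n, rfl, rfl⟩
    lia
  · intro h
    exact ⟨(k + 2 * l + 1) / 5, l - 2 * ((k + 2 * l + 1) / 5), by lia, by lia⟩

-- Multiplication by `i` permutes the nonzero residues cyclically: `1 → 2 → 4 → 3 → 1`.
theorem hasSum_of_rotOddPair_invariant {E : Type*} [AddCommMonoid E] [TopologicalSpace E]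
    [ContinuousAdd E] {f : ℤ × ℤ → E} (hf : ∀ p, f (rotOddPair p) = f p) {a b : E}
    (ha : HasSum (f ∘ mulOddPair) a) (hb : HasSum (f ∘ offsetOddPair) b) :
    HasSum f (a + 4 • b) := by
  classical
  have hrot {r : ZMod 5} (h : HasSum ((oddPairResidue ⁻¹' {2 * r}).indicator f) b) :
      HasSum ((oddPairResidue ⁻¹' {r}).indicator f) b := by
    have hdouble : ∀ r s : ZMod 5, 2 * s = 2 * r ↔ s = r := by decide
    refine (rotOddPair.hasSum_iff.mpr h).congr_fun fun p => ?_
    simp only [Set.indicator_apply, Function.comp_apply, Set.mem_preimage, Set.mem_singleton_iff,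
      oddPairResidue_rotOddPair, hf, hdouble]
  have h₀ : HasSum ((oddPairResidue ⁻¹' {0}).indicator f) a := by
    rw [← range_mulOddPair, ← hasSum_subtype_iff_indicator]
    exact mulOddPair_injective.hasSum_range_iff.mpr ha
  have h₁ : HasSum ((oddPairResidue ⁻¹' {1}).indicator f) b := by
    rw [← range_offsetOddPair, ← hasSum_subtype_iff_indicator]
    exact offsetOddPair_injective.hasSum_range_iff.mpr hb
  have h₃ : HasSum ((oddPairResidue ⁻¹' {3}).indicator f) b := hrot h₁
  have h₄ : HasSum ((oddPairResidue ⁻¹' {4}).indicator f) b := hrot h₃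
  have h₂ : HasSum ((oddPairResidue ⁻¹' {2}).indicator f) b := hrot h₄
  convert h₀.add (h₁.add (h₂.add (h₃.add h₄))) using 1
  · ext p
    have hcases : ∀ s : ZMod 5, s = 0 ∨ s = 1 ∨ s = 2 ∨ s = 3 ∨ s = 4 := by decide
    rcases hcases (oddPairResidue p) with h | h | h | h | h <;>
      simp +decide [h]
  · abel

lemma neg_one_zpow_add_two_mul (b c : ℤ) : (-1 : ℂ) ^ (b + 2 * c) = (-1) ^ b := by
  rw [zpow_add₀ (by norm_num), zpow_mul]
  simp

lemma oddPairTerm_rotOddPair (τ : ℂ) (p : ℤ × ℤ) :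
    oddPairTerm τ (rotOddPair p) = oddPairTerm τ p := by
  obtain ⟨k, l⟩ := p
  have hsign : (-1 : ℂ) ^ (-l - 1 + k) = -(-1) ^ (k + l) := by
    rw [show -l - 1 + k = k + l + 1 + 2 * (-l - 1) by ring, neg_one_zpow_add_two_mul,
      zpow_add_one₀ (by norm_num), mul_neg_one]
  simp only [oddPairTerm, rotOddPair, Equiv.coe_fn_mk, hsign]
  push_cast
  ring_nf

-- `Re (((1 - 2i) (A + iB)) ^ 2) = 8 A B - 3 (A ^ 2 - B ^ 2)`
lemma oddPairTerm_eq_thetaTerm_mul (τ : ℂ) (p : ℤ × ℤ) :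
    oddPairTerm τ p = 8 * (thetaTerm 1 1 1 τ p.1 * thetaTerm 1 1 1 τ p.2) -
      3 * (thetaTerm 1 1 2 τ p.1 * thetaTerm 1 1 0 τ p.2 -
        thetaTerm 1 1 0 τ p.1 * thetaTerm 1 1 2 τ p.2) := by
  simp only [oddPairTerm, thetaTerm]
  rw [zpow_add₀ (by norm_num : (-1 : ℂ) ≠ 0), add_div, mul_add (2 * π * I * τ), Complex.exp_add]
  push_cast
  ring_nf

lemma oddPairTerm_mulOddPair (τ : ℂ) (p : ℤ × ℤ) :
    oddPairTerm τ (mulOddPair p) =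
      25 * (thetaTerm 1 1 2 (5 * τ) p.1 * thetaTerm 1 1 0 (5 * τ) p.2 -
        thetaTerm 1 1 0 (5 * τ) p.1 * thetaTerm 1 1 2 (5 * τ) p.2) := by
  obtain ⟨u, v⟩ := p
  have hsign : (-1 : ℂ) ^ (u - 2 * v - 1 + (2 * u + v + 1)) = (-1) ^ u * (-1) ^ v := by
    rw [show u - 2 * v - 1 + (2 * u + v + 1) = u + v + 2 * (u - v) by ring,
      neg_one_zpow_add_two_mul, zpow_add₀ (by norm_num)]
  have hexp : 2 * π * I * τ * (((2 * (u - 2 * v - 1 : ℤ) + 1) ^ 2 +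
      (2 * (2 * u + v + 1 : ℤ) + 1) ^ 2) / 8) =
      2 * π * I * (5 * τ) * ((2 * (1 : ℕ) * u + 1) ^ 2 / (8 * (1 : ℕ))) +
        2 * π * I * (5 * τ) * ((2 * (1 : ℕ) * v + 1) ^ 2 / (8 * (1 : ℕ))) := by
    push_cast
    ring
  simp only [oddPairTerm, mulOddPair, thetaTerm, hsign, hexp, Complex.exp_add]
  push_cast
  ring

lemma oddPairTerm_offsetOddPair (τ : ℂ) (p : ℤ × ℤ) :
    oddPairTerm τ (offsetOddPair p) =
      thetaTerm 5 1 0 τ p.1 * thetaTerm 5 3 2 τ p.2 -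
        thetaTerm 5 1 2 τ p.1 * thetaTerm 5 3 0 τ p.2 := by
  obtain ⟨m, n⟩ := p
  have hsign : (-1 : ℂ) ^ (m - 2 * n - 1 + (2 * m + n)) = -((-1) ^ m * (-1) ^ n) := by
    rw [show m - 2 * n - 1 + (2 * m + n) = m + n + 1 + 2 * (m - n - 1) by ring,
      neg_one_zpow_add_two_mul, zpow_add_one₀ (by norm_num), zpow_add₀ (by norm_num), mul_neg_one]
  have hexp : 2 * π * I * τ * (((2 * (m - 2 * n - 1 : ℤ) + 1) ^ 2 +
      (2 * (2 * m + n : ℤ) + 1) ^ 2) / 8) =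
      2 * π * I * τ * ((2 * (5 : ℕ) * m + 1) ^ 2 / (8 * (5 : ℕ))) +
        2 * π * I * τ * ((2 * (5 : ℕ) * n + 3) ^ 2 / (8 * (5 : ℕ))) := by
    push_cast
    ring
  simp only [oddPairTerm, offsetOddPair, thetaTerm, hsign, hexp, Complex.exp_add]
  push_cast
  ring

variable {τ : ℂ}

lemma hasSum_thetaTerm_mul {M N : ℕ} (hM : M ≠ 0) (hN : N ≠ 0) (c d : ℂ) (p r : ℕ)
    (hτ : 0 < τ.im) :
    HasSum (fun x : ℤ × ℤ => thetaTerm M c p τ x.1 * thetaTerm N d r τ x.2)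
      (thetaSeries M c p τ * thetaSeries N d r τ) :=
  (hasSum_thetaTerm hM c p hτ).mul (hasSum_thetaTerm hN d r hτ) <|
    summable_mul_of_summable_norm (summable_thetaTerm hM c p hτ).norm
      (summable_thetaTerm hN d r hτ).norm

lemma hasSum_thetaTerm_two_mul_zero_sub (hτ : 0 < τ.im) :
    HasSum (fun x : ℤ × ℤ => thetaTerm 1 1 2 τ x.1 * thetaTerm 1 1 0 τ x.2 -
      thetaTerm 1 1 0 τ x.1 * thetaTerm 1 1 2 τ x.2) 0 := by
  simpa [thetaSeries_one_one_zero] using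
    (hasSum_thetaTerm_mul one_ne_zero one_ne_zero 1 1 2 0 hτ).sub
      (hasSum_thetaTerm_mul one_ne_zero one_ne_zero 1 1 0 2 hτ)

lemma hasSum_oddPairTerm (hτ : 0 < τ.im) : HasSum (oddPairTerm τ) (32 * dedekindEta τ ^ 6) := by
  have hsum := ((hasSum_thetaTerm_mul one_ne_zero one_ne_zero 1 1 1 1 hτ).mul_left 8).sub
    ((hasSum_thetaTerm_two_mul_zero_sub hτ).mul_left 3)
  rwa [← funext (f := oddPairTerm τ) (oddPairTerm_eq_thetaTerm_mul τ), thetaSeries_one_one_one hτ,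
    show 8 * (2 * dedekindEta τ ^ 3 * (2 * dedekindEta τ ^ 3)) - 3 * 0 = 32 * dedekindEta τ ^ 6
      by ring] at hsum

theorem wronskian_thetaSeries_five (hτ : 0 < τ.im) :
    thetaSeries 5 1 0 τ * thetaSeries 5 3 2 τ - thetaSeries 5 1 2 τ * thetaSeries 5 3 0 τ =
      8 * dedekindEta τ ^ 6 := by
  have hmul : HasSum (oddPairTerm τ ∘ mulOddPair) 0 := by
    rw [funext (f := oddPairTerm τ ∘ mulOddPair) (oddPairTerm_mulOddPair τ)]
    simpa only [mul_zero] using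
      (hasSum_thetaTerm_two_mul_zero_sub (τ := 5 * τ) (by simpa using hτ)).mul_left 25
  have five_ne_zero : 5 ≠ 0 := by norm_num
  have hoffset := (hasSum_thetaTerm_mul five_ne_zero five_ne_zero 1 3 0 2 hτ).sub
    (hasSum_thetaTerm_mul five_ne_zero five_ne_zero 1 3 2 0 hτ)
  rw [← funext (f := oddPairTerm τ ∘ offsetOddPair) (oddPairTerm_offsetOddPair τ)] at hoffset
  have h := (hasSum_of_rotOddPair_invariant (oddPairTerm_rotOddPair τ) hmul hoffset).unique
    (hasSum_oddPairTerm hτ)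
  simp only [zero_add, nsmul_eq_mul] at h
  linear_combination h / 4

end GaussianIntegerLattice

section Characters

variable {τ : ℂ}

lemma hasProd_prod_fin_add_mul {M : Type*} [CommMonoid M] [TopologicalSpace M] [ContinuousMul M]
    [RegularSpace M] {f : ℕ → M} {a : M} (hf : HasProd f a) (N : ℕ) [NeZero N] :
    HasProd (fun k => ∏ i : Fin N, f (i + N * k)) a :=
  ((Nat.divModEquiv N).symm.hasProd_iff.mpr hf).prod_fiberwise fun k => by
    simpa [Nat.divModEquiv, add_comm, mul_comm] using
      hasProd_fintype fun i : Fin N => f (i + N * k)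

lemma hasProd_eulerFunction_mod_five {q : ℂ} (hq : ‖q‖ < 1) :
    HasProd (fun k : ℕ => (1 - q ^ (5 * (k + 1))) *
      (({1, 2, 3, 4} : Multiset ℕ).map fun c => 1 - q ^ (5 * k + c)).prod) (eulerFunction q) := by
  refine (hasProd_prod_fin_add_mul (ModularForm.multipliable_one_sub_pow hq).hasProd 5).congr_fun
    fun k => ?_
  simp only [Multiset.insert_eq_cons, Multiset.map_cons, Multiset.map_singleton,
    Multiset.prod_cons, Multiset.prod_singleton, Fin.prod_univ_five, Fin.coe_ofNat_eq_mod]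
  ring

lemma hasProd_inv_one_sub_pow_mul {a b d e : ℕ} (hab : a + b = 5)
    (hperm : ({a, b, d, e} : Multiset ℕ) = {1, 2, 3, 4}) (hτ : 0 < τ.im) :
    HasProd (fun n : ℕ => ((1 - cexp (2 * π * I * τ) ^ (5 * n + d)) *
        (1 - cexp (2 * π * I * τ) ^ (5 * n + e)))⁻¹)
      (thetaSeries 5 (a - b) 0 τ / cexp (2 * π * I * τ * ((a - b) ^ 2 / (8 * (5 : ℕ)))) *
        (eulerFunction (cexp (2 * π * I * τ)))⁻¹) := by
  have hq := norm_cexp_two_pi_mul_I_lt_one hτ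
  have htheta := hasProd_thetaSeries (a := a) (b := b) (by simp [hab]) hτ
  rw [hab] at htheta
  have heuler := hasProd_eulerFunction_mod_five hq
  rw [← hperm] at heuler
  refine (htheta.mul (heuler.inv₀ (eulerFunction_ne_zero hq))).congr_fun fun n => ?_
  have hne {c : ℕ} (hc : c ∈ ({a, b, d, e} : Multiset ℕ)) :
      1 - cexp (2 * π * I * τ) ^ (5 * n + c) ≠ 0 := by
    obtain ⟨c, rfl⟩ := Nat.exists_eq_succ_of_ne_zero
      (show c ≠ 0 by rintro rfl; exact absurd (hperm ▸ hc) (by decide))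
    exact one_sub_pow_succ_ne_zero hq _
  have h₅ : 1 - cexp (2 * π * I * τ) ^ (5 * (n + 1)) ≠ 0 := one_sub_pow_succ_ne_zero hq (5 * n + 4)
  have ha := hne (c := a) (by simp)
  have hb := hne (c := b) (by simp)
  simp only [Multiset.insert_eq_cons, Multiset.map_cons, Multiset.map_singleton,
    Multiset.prod_cons, Multiset.prod_singleton]
  rw [← div_eq_mul_inv, mul_div_mul_left _ _ h₅, mul_div_mul_left _ _ ha, div_mul_cancel_left₀ hb]

theorem cexp_mul_tprod_inv_eq_thetaSeries_div_dedekindEta {a b d e : ℕ} (hab : a + b = 5)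
    (hperm : ({a, b, d, e} : Multiset ℕ) = {1, 2, 3, 4}) {c r : ℂ} (hc : a - b = c)
    (hr : c ^ 2 / 40 - 1 / 24 = r) (hτ : 0 < τ.im) :
    cexp (2 * π * I * τ * r) * ∏' n : ℕ, ((1 - cexp (2 * π * I * τ) ^ (5 * n + d)) *
        (1 - cexp (2 * π * I * τ) ^ (5 * n + e)))⁻¹ = thetaSeries 5 c 0 τ / dedekindEta τ := by
  have hexp : cexp (2 * π * I * τ * r) =
      cexp (2 * π * I * τ * (c ^ 2 / (8 * (5 : ℕ)))) / cexp (2 * π * I * τ / 24) := by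
    rw [← hr, ← Complex.exp_sub]
    push_cast
    ring_nf
  rw [(hasProd_inv_one_sub_pow_mul hab hperm hτ).tprod_eq, hexp, dedekindEta, ← eulerFunction, hc]
  field_simp

lemma dedekindEta_eq_eta : dedekindEta = ModularForm.eta := by
  ext τ
  simp only [dedekindEta, ModularForm.eta, ModularForm.eta_q_eq_pow, Function.Periodic.qParam]
  push_cast
  rfl

lemma dedekindEta_pow_four (hτ : 0 < τ.im) :
    dedekindEta τ ^ 4 = cexp (2 * π * I * τ / 6) *
      ∏' n : ℕ, (1 - cexp (2 * π * I * τ) ^ (n + 1)) ^ 4 := by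
  rw [(ModularForm.multipliable_one_sub_pow (norm_cexp_two_pi_mul_I_lt_one hτ)).tprod_pow,
    dedekindEta, mul_pow, ← Complex.exp_nat_mul]
  ring_nf

lemma wronskian_div {𝕜 : Type*} [NontriviallyNormedField 𝕜] {f g h : 𝕜 → 𝕜} {x : 𝕜}
    (hf : DifferentiableAt 𝕜 f x) (hg : DifferentiableAt 𝕜 g x) (hh : DifferentiableAt 𝕜 h x)
    (hx : h x ≠ 0) :
    f x / h x * deriv (fun t => g t / h t) x - deriv (fun t => f t / h t) x * (g x / h x) =
      (f x * deriv g x - deriv f x * g x) / h x ^ 2 := by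
  rw [deriv_fun_div hf hh hx, deriv_fun_div hg hh hx]
  field_simp
  ring

theorem wronskian_thetaSeries_five_div_dedekindEta (hτ : 0 < τ.im) :
    thetaSeries 5 3 0 τ / dedekindEta τ * deriv (fun t => thetaSeries 5 1 0 t / dedekindEta t) τ -
      deriv (fun t => thetaSeries 5 3 0 t / dedekindEta t) τ *
        (thetaSeries 5 1 0 τ / dedekindEta τ) = 2 * π * I * (-(1 / 5) * dedekindEta τ ^ 4) := by
  have five_ne_zero : 5 ≠ 0 := by norm_num
  have h₁ := hasDerivAt_thetaSeries five_ne_zero 1 hτ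
  have h₃ := hasDerivAt_thetaSeries five_ne_zero 3 hτ
  have heta : DifferentiableAt ℂ dedekindEta τ :=
    dedekindEta_eq_eta ▸ ModularForm.differentiableAt_eta_of_mem_upperHalfPlaneSet hτ
  have heta₀ : dedekindEta τ ≠ 0 := dedekindEta_eq_eta ▸ ModularForm.eta_ne_zero hτ
  rw [wronskian_div h₃.differentiableAt h₁.differentiableAt heta heta₀, h₁.deriv, h₃.deriv,
    div_eq_iff (pow_ne_zero 2 heta₀)]
  push_cast
  linear_combination -(2 * π * I / 40) * wronskian_thetaSeries_five hτ

end Characters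

/-- The Wronskian (with respect to `' = (2πi)⁻¹ d/dτ = q d/dq`) of the two modified
`c = -22/5` characters equals `(-1/5) q^{1/6} ∏_{n≥1}(1-qⁿ)⁴ = (-1/5) η(τ)⁴`. -/
theorem wronskian_RR_characters (y₁ y₂ : ℂ → ℂ)
    (hy₁ : y₁ = fun τ : ℂ => Complex.exp (2 * π * I * τ * (11 / 60)) *
      ∏' n : ℕ, ((1 - Complex.exp (2 * π * I * τ) ^ (5 * n + 2))
        * (1 - Complex.exp (2 * π * I * τ) ^ (5 * n + 3)))⁻¹)
    (hy₂ : y₂ = fun τ : ℂ => Complex.exp (2 * π * I * τ * (-1 / 60)) *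
      ∏' n : ℕ, ((1 - Complex.exp (2 * π * I * τ) ^ (5 * n + 1))
        * (1 - Complex.exp (2 * π * I * τ) ^ (5 * n + 4)))⁻¹)
    (D : (ℂ → ℂ) → (ℂ → ℂ)) (hD : D = fun f => fun τ => (2 * π * I)⁻¹ * deriv f τ)
    (τ : ℂ) (hτ : 0 < τ.im) :
    y₁ τ * D y₂ τ - D y₁ τ * y₂ τ
        = -(1 / 5) * Complex.exp (2 * π * I * τ / 6)
            * ∏' n : ℕ, (1 - Complex.exp (2 * π * I * τ) ^ (n + 1)) ^ 4 ∧
      y₁ τ * D y₂ τ - D y₁ τ * y₂ τ = -(1 / 5) * dedekindEta τ ^ 4 := by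
  have h₁ (t : ℂ) (ht : 0 < t.im) : y₁ t = thetaSeries 5 3 0 t / dedekindEta t := by
    rw [hy₁]
    exact cexp_mul_tprod_inv_eq_thetaSeries_div_dedekindEta (a := 4) (b := 1) rfl (by decide)
      (by norm_num) (by norm_num) ht
  have h₂ (t : ℂ) (ht : 0 < t.im) : y₂ t = thetaSeries 5 1 0 t / dedekindEta t := by
    rw [hy₂]
    exact cexp_mul_tprod_inv_eq_thetaSeries_div_dedekindEta (a := 3) (b := 2) rfl (by decide)
      (by norm_num) (by norm_num) ht
  have hpos : ∀ᶠ t : ℂ in 𝓝 τ, 0 < t.im :=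
    (isOpen_lt continuous_const continuous_im).mem_nhds hτ
  have hwronskian : y₁ τ * D y₂ τ - D y₁ τ * y₂ τ = -(1 / 5) * dedekindEta τ ^ 4 := by
    simp only [hD, EventuallyEq.deriv_eq (hpos.mono h₁), EventuallyEq.deriv_eq (hpos.mono h₂),
      h₁ τ hτ, h₂ τ hτ]
    rw [← inv_mul_cancel_left₀ two_pi_I_ne_zero (-(1 / 5) * dedekindEta τ ^ 4),
      ← wronskian_thetaSeries_five_div_dedekindEta hτ]
    ring
  refine ⟨?_, hwronskian⟩
  rw [hwronskian, dedekindEta_pow_four hτ, ← mul_assoc]
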